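/- arXiv:2506.10801 — 8 statements merged into one kernel-verified Lean document; each statement's English description precedes it below -/
import Mathlib

section
/- Let ξ_1, …, ξ_M be distinct points in ℝ^d with minimum pairwise Euclidean distance r = min_{μ ≠ ν} ‖ξ_μ − ξ_ν‖ > 0, and let β > 2/r². Then for every index μ, the LSR gradient field vanishes exactly at the stored memory: g(ξ_μ) = 0. -/
open Finset

/-! Since `β > 2 / r²`, the squared support radius `2 / β` is smaller than `r²`, so the only memory
active at `ξ μ` is `ξ μ` itself; its contribution `ξ μ - ξ μ` to the numerator is zero. -/

/-- For distinct memories with minimum pairwise distance at least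
`r > 0` and inverse temperature `β > 2/r²`, the LSR gradient field
`g(x) = (∑_{μ ∈ B(x)} (x − ξ μ)) / (ε + ∑_ν max(0, 1 − (β/2)‖x − ξ ν‖²))`,
where `B(x) = {μ : ‖x − ξ μ‖² < 2/β}`, vanishes exactly at every stored
memory `ξ μ`. -/
theorem lsr_gradient_vanishes_at_memories
    (d M : ℕ) (ξ : Fin M → EuclideanSpace ℝ (Fin d))
    (hdist : Function.Injective ξ)
    (r β ε : ℝ) (hr : 0 < r)
    (hrmin : ∀ μ ν : Fin M, μ ≠ ν → r ≤ ‖ξ μ - ξ ν‖)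
    (hβ : 2 / r ^ 2 < β) (hε : 0 ≤ ε) :
    ∀ μ : Fin M,
      (ε + ∑ ν, max 0 (1 - β / 2 * ‖ξ μ - ξ ν‖ ^ 2))⁻¹ •
        (∑ κ ∈ Finset.univ.filter (fun κ => ‖ξ μ - ξ κ‖ ^ 2 < 2 / β), (ξ μ - ξ κ))
      = 0 := by
  intro μ
  -- The sum vanishes: each index in the filter is forced to equal `μ`.
  refine smul_eq_zero_of_right _ (Finset.sum_eq_zero ?_)
  intro κ hκ
  by_contra hne
  have hμκ : μ ≠ κ := by
    rintro rfl
    exact hne (sub_self _)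
  have hclose : ‖ξ μ - ξ κ‖ ^ 2 < 2 / β := (Finset.mem_filter.mp hκ).2
  have hfar : r ^ 2 ≤ ‖ξ μ - ξ κ‖ ^ 2 := by
    gcongr
    exact hrmin μ κ hμκ
  have hβpos : 0 < β := lt_trans (by positivity) hβ
  have hradius : 2 / β < r ^ 2 := (div_lt_comm₀ (by positivity) hβpos).mp hβ
  linarith
end

section
/- Let ξ_1, …, ξ_M ∈ ℝ^d, β > 0, ε ≥ 0, and let x ∈ ℝ^d be a point such that ‖x − ξ_ν‖² ≠ 2/β for every ν and ε + Σ_{ν=1}^M max(0, 1 − (β/2)‖x − ξ_ν‖²) > 0. Then the LSR energy E is differentiable at x, and its gradient at x equals the LSR gradient field g(x) = (Σ_{μ ∈ B(x)} (x − ξ_μ))/(ε + Σ_{ν=1}^M max(0, 1 − (β/2)‖x − ξ_ν‖²)). -/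
open Finset

/-!
Off the sphere `‖x - a‖² = 2/β` the argument of each ReLU is nonzero at `x`, so by continuity it
keeps its sign near `x`. Each summand therefore agrees near `x` with a quadratic or with zero, and
has gradient `-β (x - a)` or `0` there (`hasFDerivAt_relu_quadratic`). The gradient of `E` follows
by summing over the memories and applying the chain rule for `log` at a positive argument.
-/

/-- A single ReLU summand is differentiable off its boundary sphere. The derivative is written as
the inner product with the gradient vector. -/
lemma hasFDerivAt_relu_quadratic {F : Type*} [NormedAddCommGroup F] [InnerProductSpace ℝ F]
    {β : ℝ} (hβ : 0 < β) (a x : F) (h : ‖x - a‖ ^ 2 ≠ 2 / β) :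
    HasFDerivAt (fun y : F => max 0 (1 - β / 2 * ‖y - a‖ ^ 2))
      (innerSL ℝ (if ‖x - a‖ ^ 2 < 2 / β then (-β) • (x - a) else 0)) x := by
  have hcont : Continuous fun y : F => ‖y - a‖ ^ 2 := by fun_prop
  split_ifs with hlt
  · have hq : HasFDerivAt (fun y : F => 1 - β / 2 * ‖y - a‖ ^ 2)
        (innerSL ℝ ((-β) • (x - a))) x := by
      have hsub := (hasFDerivAt_id (𝕜 := ℝ) x).sub_const a
      refine ((hsub.norm_sq.const_mul (β / 2)).const_sub 1).congr_fderiv ?_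
      ext v
      simp only [id_eq, neg_apply, smul_apply, ContinuousLinearMap.comp_apply,
        ContinuousLinearMap.id_apply, innerSL_apply_apply, real_inner_smul_left, smul_eq_mul,
        nsmul_eq_mul]
      ring
    refine hq.congr_of_eventuallyEq ?_
    filter_upwards [hcont.continuousAt.eventually_lt_const hlt] with y hy
    rw [lt_div_iff₀ hβ] at hy
    exact max_eq_right (by linarith)
  · rw [map_zero]
    refine (hasFDerivAt_const (0 : ℝ) x).congr_of_eventuallyEq ?_
    have hgt : 2 / β < ‖x - a‖ ^ 2 := lt_of_le_of_ne (not_lt.mp hlt) h.symm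
    filter_upwards [hcont.continuousAt.eventually_const_lt hgt] with y hy
    rw [div_lt_iff₀ hβ] at hy
    exact max_eq_left (by linarith)

/-- At any point `x` where no memory lies exactly on the
activation boundary (`‖x − ξ ν‖² ≠ 2/β` for all `ν`) and the argument of the
logarithm is positive, the LSR energy
`E(x) = −(1/β)·log(ε + ∑_μ max(0, 1 − (β/2)‖x − ξ μ‖²))`
is differentiable at `x` with gradient equal to the LSR gradient field
`g(x) = (∑_{μ ∈ B(x)} (x − ξ μ)) / (ε + ∑_ν max(0, 1 − (β/2)‖x − ξ ν‖²))`,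
where `B(x) = {μ : ‖x − ξ μ‖² < 2/β}`. -/
theorem lsr_energy_hasGradientAt
    (d M : ℕ) (ξ : Fin M → EuclideanSpace ℝ (Fin d))
    (β ε : ℝ) (hβ : 0 < β) (hε : 0 ≤ ε)
    (x : EuclideanSpace ℝ (Fin d))
    (hbdry : ∀ ν : Fin M, ‖x - ξ ν‖ ^ 2 ≠ 2 / β)
    (hden : 0 < ε + ∑ ν, max 0 (1 - β / 2 * ‖x - ξ ν‖ ^ 2)) :
    HasGradientAt
      (fun y : EuclideanSpace ℝ (Fin d) =>
        -(1 / β) * Real.log (ε + ∑ μ, max 0 (1 - β / 2 * ‖y - ξ μ‖ ^ 2)))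
      ((ε + ∑ ν, max 0 (1 - β / 2 * ‖x - ξ ν‖ ^ 2))⁻¹ •
        (∑ κ ∈ Finset.univ.filter (fun κ => ‖x - ξ κ‖ ^ 2 < 2 / β), (x - ξ κ)))
      x := by
  have hsum := HasFDerivAt.fun_sum (u := Finset.univ)
    fun μ _ => hasFDerivAt_relu_quadratic hβ (ξ μ) x (hbdry μ)
  rw [hasGradientAt_iff_hasFDerivAt]
  refine (((hsum.const_add ε).log hden.ne').const_mul (-(1 / β))).congr_fderiv ?_
  -- The factor `-1/β` in front of the logarithm cancels the `-β` of the active summands.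
  rw [← map_sum, ← Finset.sum_filter, ← Finset.smul_sum]
  ext v
  simp only [InnerProductSpace.toDual_apply_apply, smul_apply,
    innerSL_apply_apply, real_inner_smul_left, smul_eq_mul]
  field_simp
end

section
/- Let ξ_1, …, ξ_M ∈ ℝ^d, β > 0, ε ≥ 0, and let B ⊆ {1,…,M} be nonempty. Consider the smooth function F(x) = −(1/β)·log(ε + Σ_{μ ∈ B} (1 − (β/2)‖x − ξ_μ‖²)), defined on the open set where the argument of the logarithm is positive. If x* is a critical point of F (equivalently, x* = (1/|B|)·Σ_{μ ∈ B} ξ_μ), then the Hessian of F at x* equals c·I_d with c = |B| / (ε + Σ_{μ ∈ B} (1 − (β/2)‖x* − ξ_μ‖²)) > 0; in particular the Hessian at x* is positive definite. -/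
/-!
Write `G y = ε + ∑_{μ ∈ B} (1 - (β/2)‖y - ξ μ‖²)` for the argument of the logarithm.  Since
`∇G y = -β ∑_{μ ∈ B} (y - ξ μ) = -β |B| (y - xstar)`, the chain rule gives
`∇F y = (|B| / G y) • (y - xstar)` wherever `G y ≠ 0`, hence near `xstar`.  This is a scalar field
times a vector field vanishing at `xstar`, so in the product rule the term with the derivative of
`|B| / G` drops out, leaving `(|B| / G xstar) • id`.
-/

open Finset RealInnerProductSpace

/-- The derivative of the argument of the logarithm. -/
lemma hasFDerivAt_logArg {E ι : Type*} [NormedAddCommGroup E] [InnerProductSpace ℝ E]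
    (ξ : ι → E) (β ε : ℝ) (B : Finset ι) (y : E) :
    HasFDerivAt (fun y : E => ε + ∑ μ ∈ B, (1 - β / 2 * ‖y - ξ μ‖ ^ 2))
      (-β • innerSL ℝ (∑ μ ∈ B, (y - ξ μ))) y := by
  have h : HasFDerivAt (fun y : E => ∑ μ ∈ B, (1 - β / 2 * ‖y - ξ μ‖ ^ 2))
      (∑ μ ∈ B, -((β / 2) • (2 • (innerSL ℝ (y - ξ μ)).comp (ContinuousLinearMap.id ℝ E)))) y :=
    HasFDerivAt.fun_sum fun μ _ =>
      ((((hasFDerivAt_id y).sub_const (ξ μ)).norm_sq).const_mul (β / 2)).const_sub 1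
  refine (h.const_add ε).congr_fderiv ?_
  ext v
  simp
  rw [← nsmul_eq_mul, ← Finset.sum_const, ← Finset.sum_sub_distrib, Finset.mul_sum]
  refine Finset.sum_congr rfl fun μ _ => ?_
  ring

lemma hasGradientAt_neg_log {E ι : Type*} [NormedAddCommGroup E] [InnerProductSpace ℝ E]
    [CompleteSpace E] (ξ : ι → E) {β : ℝ} (ε : ℝ) (hβ : β ≠ 0) (B : Finset ι) (y : E)
    (hy : ε + ∑ μ ∈ B, (1 - β / 2 * ‖y - ξ μ‖ ^ 2) ≠ 0) :
    HasGradientAt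
      (fun y : E => -(1 / β) * Real.log (ε + ∑ μ ∈ B, (1 - β / 2 * ‖y - ξ μ‖ ^ 2)))
      ((ε + ∑ μ ∈ B, (1 - β / 2 * ‖y - ξ μ‖ ^ 2))⁻¹ • ∑ μ ∈ B, (y - ξ μ)) y := by
  rw [hasGradientAt_iff_hasFDerivAt]
  refine (((hasFDerivAt_logArg ξ β ε B y).log hy).const_mul (-(1 / β))).congr_fderiv ?_
  ext v
  simp only [smul_apply, innerSL_apply_apply, smul_eq_mul,
    InnerProductSpace.toDual_apply_apply, real_inner_smul_left]
  field_simp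

/-- On the region where exactly the memories indexed by `B ≠ ∅`
are activated, the smooth representative of the LSR energy is
`F(y) = −(1/β)·log(ε + ∑_{μ ∈ B} (1 − (β/2)‖y − ξ μ‖²))`.  At its critical
point `xstar = (1/|B|)·∑_{μ ∈ B} ξ μ` the Hessian of `F` (the derivative of
the gradient field of `F`) equals `c · I_d` with
`c = |B| / (ε + ∑_{μ ∈ B} (1 − (β/2)‖xstar − ξ μ‖²)) > 0`; in particular it
is positive definite. -/
theorem lsr_hessian_at_critical_point
    (d M : ℕ) (ξ : Fin M → EuclideanSpace ℝ (Fin d))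
    (β ε : ℝ) (hβ : 0 < β) (hε : 0 ≤ ε)
    (B : Finset (Fin M)) (hBne : B.Nonempty)
    (xstar : EuclideanSpace ℝ (Fin d))
    (hcrit : xstar = (B.card : ℝ)⁻¹ • ∑ μ ∈ B, ξ μ)
    (hden : 0 < ε + ∑ μ ∈ B, (1 - β / 2 * ‖xstar - ξ μ‖ ^ 2)) :
    0 < (B.card : ℝ) / (ε + ∑ μ ∈ B, (1 - β / 2 * ‖xstar - ξ μ‖ ^ 2)) ∧
    HasFDerivAt
      (gradient (fun y : EuclideanSpace ℝ (Fin d) =>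
        -(1 / β) * Real.log (ε + ∑ μ ∈ B, (1 - β / 2 * ‖y - ξ μ‖ ^ 2))))
      (((B.card : ℝ) / (ε + ∑ μ ∈ B, (1 - β / 2 * ‖xstar - ξ μ‖ ^ 2))) •
        ContinuousLinearMap.id ℝ (EuclideanSpace ℝ (Fin d))) xstar ∧
    ∀ v : EuclideanSpace ℝ (Fin d), v ≠ 0 →
      0 < ⟪(((B.card : ℝ) / (ε + ∑ μ ∈ B, (1 - β / 2 * ‖xstar - ξ μ‖ ^ 2))) •
              ContinuousLinearMap.id ℝ (EuclideanSpace ℝ (Fin d))) v, v⟫ := by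
  set G : EuclideanSpace ℝ (Fin d) → ℝ := fun y => ε + ∑ μ ∈ B, (1 - β / 2 * ‖y - ξ μ‖ ^ 2)
    with hG
  have hcard : 0 < (B.card : ℝ) := by exact_mod_cast hBne.card_pos
  have hc : 0 < (B.card : ℝ) / G xstar := div_pos hcard hden
  have hsum : ∀ y, ∑ μ ∈ B, (y - ξ μ) = (B.card : ℝ) • (y - xstar) := by
    intro y
    rw [hcrit, smul_sub, smul_inv_smul₀ hcard.ne', Finset.sum_sub_distrib, Finset.sum_const,
      Nat.cast_smul_eq_nsmul]
  refine ⟨hc, ?_, fun v hv => ?_⟩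
  · have hG' := hasFDerivAt_logArg ξ β ε B xstar
    have hpos : ∀ᶠ y in nhds xstar, 0 < G y := hG'.continuousAt.eventually (lt_mem_nhds hden)
    have hprod : HasFDerivAt (fun y => ((G y)⁻¹ * (B.card : ℝ)) • (y - xstar))
        (((B.card : ℝ) / G xstar) • ContinuousLinearMap.id ℝ (EuclideanSpace ℝ (Fin d)))
        xstar := by
      have hscal : DifferentiableAt ℝ (fun y => (G y)⁻¹ * (B.card : ℝ)) xstar :=
        (hG'.differentiableAt.inv hden.ne').mul_const _
      refine (hscal.hasFDerivAt.smul ((hasFDerivAt_id xstar).sub_const xstar)).congr_fderiv ?_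
      ext v
      simp [div_eq_inv_mul]
    refine hprod.congr_of_eventuallyEq ?_
    filter_upwards [hpos] with y hy
    rw [(hasGradientAt_neg_log ξ ε hβ.ne' B y hy.ne').gradient, hsum, smul_smul]
  · rw [smul_apply, ContinuousLinearMap.id_apply, real_inner_smul_left]
    exact mul_pos hc (real_inner_self_pos.2 hv)
end

section
/- Let ξ_1, …, ξ_M ∈ ℝ^d, β > 0, and let x* ∈ ℝ^d with B := B(x*) = {μ : ‖x* − ξ_μ‖² < 2/β} nonempty and not all of the indices at distance exactly √(2/β). Define δ_min = min_{μ ∈ B} (2/β − ‖x* − ξ_μ‖²), γ_min = min_{ν ∉ B} (‖x* − ξ_ν‖² − 2/β) (taken as +∞ if B = {1,…,M}), and D_max = max_{1 ≤ μ ≤ M} ‖x* − ξ_μ‖. Assume δ_min > 0 and γ_min > 0, and set r* = √(D_max² + min{δ_min, γ_min}) − D_max. Then r* > 0 and for every x ∈ ℝ^d with ‖x − x*‖ < r*, the activated index set is unchanged: B(x) = B(x*). -/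
/-!
Writing `a = ‖xstar - ξ μ‖`, `b = ‖x - ξ μ‖` and `h = ‖x - xstar‖`, the triangle inequality gives
`|b - a| ≤ h`, hence `|b² - a²| ≤ h² + 2ah ≤ (h + Dmax)² - Dmax²`. The radius is exactly the
positive root of `(h + Dmax)² - Dmax² = min δmin γmin`, so inside the ball no squared distance
moves by as much as the margin separating it from the threshold `2 / β`.
-/

open Finset

/-- If `h` is below the critical radius `√(D² + m) - D`, then the squares of two nonnegative numbers
at distance at most `h`, one of which is at most `D`, differ by less than `m`. -/
theorem abs_sq_sub_sq_lt_of_lt_sqrt_sub {a b h D m : ℝ} (ha : 0 ≤ a) (hb : 0 ≤ b) (hh : 0 ≤ h)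
    (haD : a ≤ D) (hab : |b - a| ≤ h) (hr : h < Real.sqrt (D ^ 2 + m) - D) :
    |b ^ 2 - a ^ 2| < m := by
  have hsq : (h + D) ^ 2 < D ^ 2 + m :=
    (Real.lt_sqrt (by linarith)).1 (by linarith)
  have hsum : b + a ≤ h + 2 * D := by linarith [(abs_le.1 hab).2]
  calc |b ^ 2 - a ^ 2| = |b - a| * (b + a) := by
        rw [← abs_of_nonneg (add_nonneg hb ha), ← abs_mul]
        congr 1
        ring
    _ ≤ h * (h + 2 * D) := mul_le_mul hab hsum (add_nonneg hb ha) hh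
    _ < m := by linarith

/-- Stability of the activated index set
`B(x) = {μ : ‖x − ξ μ‖² < 2/β}`.  Let `xstar` have nonempty activated set
`B = B(xstar)`, let `δmin > 0` be a lower bound on the activation margins
`2/β − ‖xstar − ξ μ‖²` for `μ ∈ B`, let `γmin > 0` be a lower bound on the
margins `‖xstar − ξ ν‖² − 2/β` for `ν ∉ B` (vacuous, i.e. arbitrary, when
`B` is everything, corresponding to `γmin = +∞`), and let `Dmax` bound all
distances `‖xstar − ξ μ‖`.  Then
`r* = √(Dmax² + min{δmin, γmin}) − Dmax > 0` and the activated set is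
unchanged on the ball of radius `r*`: `B(x) = B(xstar)` whenever
`‖x − xstar‖ < r*`. -/
theorem lsr_activated_set_stable
    (d M : ℕ) (ξ : Fin M → EuclideanSpace ℝ (Fin d))
    (β : ℝ) (hβ : 0 < β)
    (xstar : EuclideanSpace ℝ (Fin d))
    (hBne : (Finset.univ.filter (fun μ => ‖xstar - ξ μ‖ ^ 2 < 2 / β)).Nonempty)
    (δmin γmin Dmax : ℝ)
    (hδpos : 0 < δmin) (hγpos : 0 < γmin)
    (hδ : ∀ μ ∈ Finset.univ.filter (fun μ => ‖xstar - ξ μ‖ ^ 2 < 2 / β),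
      δmin ≤ 2 / β - ‖xstar - ξ μ‖ ^ 2)
    (hγ : ∀ ν ∉ Finset.univ.filter (fun μ => ‖xstar - ξ μ‖ ^ 2 < 2 / β),
      γmin ≤ ‖xstar - ξ ν‖ ^ 2 - 2 / β)
    (hD : ∀ μ : Fin M, ‖xstar - ξ μ‖ ≤ Dmax) :
    0 < Real.sqrt (Dmax ^ 2 + min δmin γmin) - Dmax ∧
    ∀ x : EuclideanSpace ℝ (Fin d),
      ‖x - xstar‖ < Real.sqrt (Dmax ^ 2 + min δmin γmin) - Dmax →
        Finset.univ.filter (fun μ => ‖x - ξ μ‖ ^ 2 < 2 / β)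
          = Finset.univ.filter (fun μ => ‖xstar - ξ μ‖ ^ 2 < 2 / β) := by
  have hm : 0 < min δmin γmin := lt_min hδpos hγpos
  -- `B` nonempty supplies an index, which forces `0 ≤ Dmax`.
  obtain ⟨μ₀, -⟩ := hBne
  have hD0 : 0 ≤ Dmax := (norm_nonneg _).trans (hD μ₀)
  refine ⟨sub_pos.2 ((Real.lt_sqrt hD0).2 (by linarith)), fun x hx => ?_⟩
  ext μ
  have htri : |‖x - ξ μ‖ - ‖xstar - ξ μ‖| ≤ ‖x - xstar‖ := by
    simpa using abs_norm_sub_norm_le (x - ξ μ) (xstar - ξ μ)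
  have hlt := abs_lt.1 (abs_sq_sub_sq_lt_of_lt_sqrt_sub (norm_nonneg _) (norm_nonneg _)
    (norm_nonneg _) (hD μ) htri hx)
  have hmδ := min_le_left δmin γmin
  have hmγ := min_le_right δmin γmin
  have hδμ := hδ μ
  have hγμ := hγ μ
  simp only [Finset.mem_filter, Finset.mem_univ, true_and] at hδμ hγμ ⊢
  constructor
  · intro hμ
    by_contra hn
    linarith [hγμ hn, hlt.1]
  · intro hμ
    linarith [hδμ hμ, hlt.2]
end

section
/- Let ξ_1, …, ξ_M ∈ ℝ^d, β > 0, ε ≥ 0, let B ⊆ {1,…,M} be nonempty with centroid x* = (1/|B|)·Σ_{μ ∈ B} ξ_μ, and let x ∈ ℝ^d be a point with B(x) = B. Then the LSR gradient field satisfies g(x) = |B|·(x − x*)/(ε + Σ_{μ ∈ B} (1 − (β/2)‖x − ξ_μ‖²)); consequently the single gradient step with step size η = (ε + Σ_{μ ∈ B} (1 − (β/2)‖x − ξ_μ‖²))/|B| retrieves the emergent memory exactly: x − η·g(x) = x*. -/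
/-! On the activated set `B` every ReLU term is positive and equals its argument, and off `B` every
ReLU term vanishes, so the denominator of the gradient is `ε + ∑ μ ∈ B, (1 - β / 2 * ‖x - ξ μ‖ ^ 2)`.
The numerator `∑ μ ∈ B, (x - ξ μ)` is `|B| • (x - xstar)` by definition of the centroid. The step
size is the reciprocal of the resulting scalar, so the step subtracts exactly `x - xstar`. -/

open Finset

/-- If the activated index set at `x` is exactly the nonempty
set `B` with centroid `xstar = (1/|B|)·∑_{μ ∈ B} ξ μ`, then the LSR gradient
field satisfies
`g(x) = (|B|/(ε + ∑_{μ ∈ B} (1 − (β/2)‖x − ξ μ‖²))) • (x − xstar)`, and the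
single gradient step with step size
`η = (ε + ∑_{μ ∈ B} (1 − (β/2)‖x − ξ μ‖²))/|B|` retrieves the emergent
memory exactly: `x − η • g(x) = xstar`. -/
theorem lsr_single_step_emergent_retrieval
    (d M : ℕ) (ξ : Fin M → EuclideanSpace ℝ (Fin d))
    (β ε : ℝ) (hβ : 0 < β) (hε : 0 ≤ ε)
    (B : Finset (Fin M)) (hBne : B.Nonempty)
    (xstar : EuclideanSpace ℝ (Fin d))
    (hxstar : xstar = (B.card : ℝ)⁻¹ • ∑ μ ∈ B, ξ μ)
    (x : EuclideanSpace ℝ (Fin d))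
    (hBx : Finset.univ.filter (fun μ => ‖x - ξ μ‖ ^ 2 < 2 / β) = B)
    (hden : 0 < ε + ∑ ν, max 0 (1 - β / 2 * ‖x - ξ ν‖ ^ 2)) :
    (ε + ∑ ν, max 0 (1 - β / 2 * ‖x - ξ ν‖ ^ 2))⁻¹ •
        (∑ κ ∈ Finset.univ.filter (fun κ => ‖x - ξ κ‖ ^ 2 < 2 / β), (x - ξ κ))
      = ((B.card : ℝ) / (ε + ∑ μ ∈ B, (1 - β / 2 * ‖x - ξ μ‖ ^ 2))) • (x - xstar) ∧
    x - ((ε + ∑ μ ∈ B, (1 - β / 2 * ‖x - ξ μ‖ ^ 2)) / (B.card : ℝ)) •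
        ((ε + ∑ ν, max 0 (1 - β / 2 * ‖x - ξ ν‖ ^ 2))⁻¹ •
          (∑ κ ∈ Finset.univ.filter (fun κ => ‖x - ξ κ‖ ^ 2 < 2 / β), (x - ξ κ)))
      = xstar := by
  have hcard : (B.card : ℝ) ≠ 0 := Nat.cast_ne_zero.mpr hBne.card_ne_zero
  have hmem (ν : Fin M) : ν ∈ B ↔ 0 < 1 - β / 2 * ‖x - ξ ν‖ ^ 2 := by
    rw [← hBx, Finset.mem_filter, lt_div_iff₀ hβ]
    constructor
    · rintro ⟨-, h⟩
      linarith
    · intro h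
      exact ⟨Finset.mem_univ ν, by linarith⟩
  have hsum : ∑ ν, max 0 (1 - β / 2 * ‖x - ξ ν‖ ^ 2)
      = ∑ μ ∈ B, (1 - β / 2 * ‖x - ξ μ‖ ^ 2) := by
    rw [← Finset.sum_subset (Finset.subset_univ B)
      fun ν _ hν => max_eq_left (not_lt.mp fun h => hν ((hmem ν).mpr h))]
    exact Finset.sum_congr rfl fun μ hμ => max_eq_right ((hmem μ).mp hμ).le
  have hnum : ∑ κ ∈ B, (x - ξ κ) = (B.card : ℝ) • (x - xstar) := by
    rw [hxstar, smul_sub, smul_inv_smul₀ hcard, Finset.sum_sub_distrib, Finset.sum_const,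
      Nat.cast_smul_eq_nsmul]
  rw [hsum] at hden
  rw [hBx, hsum, hnum]
  refine ⟨by rw [smul_smul, div_eq_inv_mul (B.card : ℝ)], ?_⟩
  rw [smul_smul, smul_smul, div_mul_eq_mul_div, mul_inv_cancel₀ hden.ne',
    one_div_mul_cancel hcard, one_smul, sub_sub_cancel]
end

section
/- Let ξ_1, …, ξ_M ∈ ℝ^d, β > 0, ε ≥ 0, and let C = {x ∈ ℝ^d : B(x) ≠ ∅, ‖x − ξ_ν‖² ≠ 2/β for all ν, and g(x) = 0} be the set of critical points of the LSR energy in the open region where at least one memory is activated. Then every x ∈ C satisfies x = (1/|B(x)|)·Σ_{μ ∈ B(x)} ξ_μ; consequently C is contained in the set of centroids of nonempty subsets of {ξ_1, …, ξ_M} and is a finite set of cardinality at most 2^M − 1. -/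
/-! Where at least one memory is active, some summand of the denominator of the gradient field is
strictly positive, so the denominator is positive even when `ε = 0`, and the gradient vanishes only if
its numerator `∑_{μ ∈ B(x)} (x - ξ μ) = |B(x)| • x - ∑_{μ ∈ B(x)} ξ μ` does
(`lsr_denominator_pos`, `eq_centroid_of_sum_sub_eq_zero`). Hence every critical point is a value of
the centroid map on the `2 ^ M - 1` nonempty index sets, which gives finiteness and the cardinality
bound (`centroids_subset_image`). -/

open Finset

theorem lsr_denominator_pos {d M : ℕ} (ξ : Fin M → EuclideanSpace ℝ (Fin d))
    {β ε : ℝ} (hβ : 0 < β) (hε : 0 ≤ ε) {x : EuclideanSpace ℝ (Fin d)} {μ : Fin M}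
    (hμ : ‖x - ξ μ‖ ^ 2 < 2 / β) :
    0 < ε + ∑ ν, max 0 (1 - β / 2 * ‖x - ξ ν‖ ^ 2) := by
  have hpos : 0 < 1 - β / 2 * ‖x - ξ μ‖ ^ 2 := by
    rw [lt_div_iff₀ hβ] at hμ
    linarith
  have hle : max 0 (1 - β / 2 * ‖x - ξ μ‖ ^ 2) ≤ ∑ ν, max 0 (1 - β / 2 * ‖x - ξ ν‖ ^ 2) :=
    Finset.single_le_sum (f := fun ν => max 0 (1 - β / 2 * ‖x - ξ ν‖ ^ 2))
      (fun ν _ => le_max_left _ _) (Finset.mem_univ μ)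
  linarith [le_max_right 0 (1 - β / 2 * ‖x - ξ μ‖ ^ 2)]

theorem eq_centroid_of_sum_sub_eq_zero {ι E : Type*} [AddCommGroup E] [Module ℝ E]
    {B : Finset ι} (hB : B.Nonempty) {ξ : ι → E} {x : E} (h : ∑ μ ∈ B, (x - ξ μ) = 0) :
    x = (B.card : ℝ)⁻¹ • ∑ μ ∈ B, ξ μ := by
  have hcard : (B.card : ℝ) ≠ 0 := by exact_mod_cast hB.card_pos.ne'
  rw [Finset.sum_sub_distrib, Finset.sum_const, sub_eq_zero, ← Nat.cast_smul_eq_nsmul ℝ] at h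
  rw [← h, inv_smul_smul₀ hcard]

theorem centroids_subset_image {M : ℕ} {E : Type*} [DecidableEq E] [AddCommGroup E] [Module ℝ E]
    (ξ : Fin M → E) :
    {y | ∃ B : Finset (Fin M), B.Nonempty ∧ y = (B.card : ℝ)⁻¹ • ∑ μ ∈ B, ξ μ} ⊆
      ((((Finset.univ : Finset (Finset (Fin M))).erase ∅).image
        fun B => (B.card : ℝ)⁻¹ • ∑ μ ∈ B, ξ μ : Finset E) : Set E) := by
  rintro y ⟨B, hB, rfl⟩
  exact Finset.mem_coe.2 (Finset.mem_image_of_mem _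
    (Finset.mem_erase.2 ⟨hB.ne_empty, Finset.mem_univ B⟩))

/-- Let `C` be the set of critical points of the LSR energy in
the open region where at least one memory is activated and no memory lies on
the activation boundary (`g(x) = 0`, `B(x) ≠ ∅`, `‖x − ξ ν‖² ≠ 2/β` for all
`ν`).  Then every `x ∈ C` is the centroid of its activated index set,
`x = (1/|B(x)|)·∑_{μ ∈ B(x)} ξ μ`; consequently `C` is contained in the set
of centroids of nonempty subsets of the stored patterns, is finite, and has
cardinality at most `2^M − 1`. -/
theorem lsr_critical_points_are_centroids
    (d M : ℕ) (ξ : Fin M → EuclideanSpace ℝ (Fin d))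
    (β ε : ℝ) (hβ : 0 < β) (hε : 0 ≤ ε)
    (C : Set (EuclideanSpace ℝ (Fin d)))
    (hC : C = {x | (Finset.univ.filter (fun μ => ‖x - ξ μ‖ ^ 2 < 2 / β)).Nonempty ∧
      (∀ ν : Fin M, ‖x - ξ ν‖ ^ 2 ≠ 2 / β) ∧
      (ε + ∑ ν, max 0 (1 - β / 2 * ‖x - ξ ν‖ ^ 2))⁻¹ •
        (∑ κ ∈ Finset.univ.filter (fun κ => ‖x - ξ κ‖ ^ 2 < 2 / β), (x - ξ κ)) = 0}) :
    (∀ x ∈ C,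
      x = ((Finset.univ.filter (fun μ => ‖x - ξ μ‖ ^ 2 < 2 / β)).card : ℝ)⁻¹ •
        ∑ μ ∈ Finset.univ.filter (fun μ => ‖x - ξ μ‖ ^ 2 < 2 / β), ξ μ) ∧
    C ⊆ {y | ∃ B : Finset (Fin M), B.Nonempty ∧ y = (B.card : ℝ)⁻¹ • ∑ μ ∈ B, ξ μ} ∧
    C.Finite ∧ C.ncard ≤ 2 ^ M - 1 := by
  classical
  have hcent : ∀ x ∈ C,
      x = ((Finset.univ.filter (fun μ => ‖x - ξ μ‖ ^ 2 < 2 / β)).card : ℝ)⁻¹ •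
        ∑ μ ∈ Finset.univ.filter (fun μ => ‖x - ξ μ‖ ^ 2 < 2 / β), ξ μ := by
    intro x hx
    rw [hC] at hx
    obtain ⟨hB, -, hg⟩ := hx
    obtain ⟨μ, hμ⟩ := id hB
    have hden := lsr_denominator_pos ξ hβ hε (Finset.mem_filter.1 hμ).2
    exact eq_centroid_of_sum_sub_eq_zero hB
      ((smul_eq_zero.1 hg).resolve_left (inv_ne_zero hden.ne'))
  have hsub : C ⊆ {y | ∃ B : Finset (Fin M), B.Nonempty ∧
      y = (B.card : ℝ)⁻¹ • ∑ μ ∈ B, ξ μ} := by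
    intro x hx
    refine ⟨_, ?_, hcent x hx⟩
    rw [hC] at hx
    exact hx.1
  have himg := hsub.trans (centroids_subset_image ξ)
  refine ⟨hcent, hsub, (Finset.finite_toSet _).subset himg, ?_⟩
  refine (Set.ncard_le_ncard himg (Finset.finite_toSet _)).trans ?_
  rw [Set.ncard_coe_finset]
  refine Finset.card_image_le.trans ?_
  rw [Finset.card_erase_of_mem (Finset.mem_univ _), Finset.card_univ, Fintype.card_finset,
    Fintype.card_fin]
end

section
/- Let ξ_1, …, ξ_M be distinct points in ℝ^d with minimum pairwise Euclidean distance r = min_{μ ≠ ν} ‖ξ_μ − ξ_ν‖ > 0, let β > 2/r² and ε ≥ 0. Then each stored pattern ξ_μ is a strict local minimum of the LSR energy: there exists ρ > 0 such that for all x with 0 < ‖x − ξ_μ‖ < ρ, one has E(x) > E(ξ_μ). -/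
open Finset

/-!
Put `s = √(2/β)`, the radius of the ball on which the ReLU term of a single memory is positive.
The assumption `β > 2/r²` says exactly that `s < r`, so on the ball of radius `r - s` about `ξ μ`
every other memory is at distance more than `s` and contributes nothing
(`sum_relu_eq_single`). There the energy is `-(1/β) log (ε + max 0 (1 - (β/2)‖x - ξ μ‖²))`. Within
distance `s` of `ξ μ` the argument of the logarithm is moreover positive, and it is strictly
smaller than its value `ε + 1` at `ξ μ` as soon as `x ≠ ξ μ`.
-/

/-- Only the nearest memory contributes to the sum of ReLU terms at a point within `r - s` of it,
where `s` is the support radius of a single term. -/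
lemma sum_relu_eq_single {d M : ℕ} {ξ : Fin M → EuclideanSpace ℝ (Fin d)} {r s β : ℝ}
    (hβ : 0 < β) (hs : 0 ≤ s) (hsβ : β / 2 * s ^ 2 = 1)
    (hrmin : ∀ μ ν : Fin M, μ ≠ ν → r ≤ ‖ξ μ - ξ ν‖)
    {μ : Fin M} {x : EuclideanSpace ℝ (Fin d)} (hx : ‖x - ξ μ‖ < r - s) :
    ∑ ν, max 0 (1 - β / 2 * ‖x - ξ ν‖ ^ 2) = max 0 (1 - β / 2 * ‖x - ξ μ‖ ^ 2) := by
  refine Finset.sum_eq_single μ (fun ν _ hν => max_eq_left ?_) (by simp)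
  have htri : ‖ξ μ - ξ ν‖ ≤ ‖x - ξ μ‖ + ‖x - ξ ν‖ := by
    simpa [norm_sub_rev] using norm_sub_le_norm_sub_add_norm_sub (ξ μ) x (ξ ν)
  have hr := hrmin μ ν hν.symm
  have hfar : s ≤ ‖x - ξ ν‖ := by linarith
  have : β / 2 * s ^ 2 ≤ β / 2 * ‖x - ξ ν‖ ^ 2 := by gcongr
  linarith

/-- For distinct memories with minimum pairwise distance at
least `r > 0`, inverse temperature `β > 2/r²` and `ε ≥ 0`, every stored
pattern `ξ μ` is a strict local minimum of the LSR energy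
`E(x) = −(1/β)·log(ε + ∑_ν max(0, 1 − (β/2)‖x − ξ ν‖²))`: there is `ρ > 0`
such that `E(ξ μ) < E(x)` whenever `0 < ‖x − ξ μ‖ < ρ`. -/
theorem lsr_stored_patterns_strict_local_minima
    (d M : ℕ) (ξ : Fin M → EuclideanSpace ℝ (Fin d))
    (hdist : Function.Injective ξ)
    (r β ε : ℝ) (hr : 0 < r)
    (hrmin : ∀ μ ν : Fin M, μ ≠ ν → r ≤ ‖ξ μ - ξ ν‖)
    (hβ : 2 / r ^ 2 < β) (hε : 0 ≤ ε) :
    ∀ μ : Fin M, ∃ ρ > 0, ∀ x : EuclideanSpace ℝ (Fin d),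
      0 < ‖x - ξ μ‖ → ‖x - ξ μ‖ < ρ →
        -(1 / β) * Real.log (ε + ∑ ν, max 0 (1 - β / 2 * ‖ξ μ - ξ ν‖ ^ 2))
          < -(1 / β) * Real.log (ε + ∑ ν, max 0 (1 - β / 2 * ‖x - ξ ν‖ ^ 2)) := by
  have hβ0 : 0 < β := lt_trans (by positivity) hβ
  set s := Real.sqrt (2 / β) with hs
  have hs0 : 0 < s := Real.sqrt_pos.2 (by positivity)
  have hsβ : β / 2 * s ^ 2 = 1 := by
    rw [hs, Real.sq_sqrt (by positivity)]
    field_simp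
  have hsr : s < r := by
    rw [hs, Real.sqrt_lt' hr, div_lt_iff₀ hβ0]
    rwa [div_lt_iff₀ (by positivity), mul_comm] at hβ
  intro μ
  refine ⟨min (r - s) s, lt_min (by linarith) hs0, fun x hx0 hx => ?_⟩
  obtain ⟨hx1, hx2⟩ := lt_min_iff.1 hx
  have hμ : ‖ξ μ - ξ μ‖ < r - s := by simpa using hsr
  rw [sum_relu_eq_single hβ0 hs0.le hsβ hrmin hx1,
    sum_relu_eq_single hβ0 hs0.le hsβ hrmin hμ]
  have hlt : β / 2 * ‖x - ξ μ‖ ^ 2 < β / 2 * s ^ 2 := by gcongr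
  have hpos : 0 < β / 2 * ‖x - ξ μ‖ ^ 2 := by positivity
  rw [max_eq_right (by linarith : 0 ≤ 1 - β / 2 * ‖x - ξ μ‖ ^ 2)]
  simp only [sub_self, norm_zero, ne_eq, OfNat.ofNat_ne_zero, not_false_eq_true, zero_pow,
    mul_zero, sub_zero, zero_le_one, max_eq_right]
  have hlog : Real.log (ε + (1 - β / 2 * ‖x - ξ μ‖ ^ 2)) < Real.log (ε + 1) :=
    Real.log_lt_log (by linarith) (by linarith)
  exact mul_lt_mul_of_neg_left hlog (neg_lt_zero.2 (by positivity))
end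

section
/- Let ξ_1, …, ξ_M ∈ ℝ^d, β > 0, ε ≥ 0, let B ⊆ {1,…,M} be nonempty with centroid x* = (1/|B|)·Σ_{μ ∈ B} ξ_μ, and suppose ρ > 0 is such that B(x) = B for all x with ‖x − x*‖ < ρ. Then x* is a strict local minimum of the LSR energy: for every x with 0 < ‖x − x*‖ < ρ, one has E(x) > E(x*). -/
/-!
On the stable ball every activated term equals `1 - (β/2)‖x - ξ ν‖²` and every other term vanishes,
so the argument of the logarithm is `ε + ∑_{ν ∈ B} (1 - (β/2)‖x - ξ ν‖²)`
(`sum_relu_eq_sum_activated`). It is positive because `B` is nonempty, and by the parallel axis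
identity (`sum_norm_sub_sq_eq`) it drops by exactly `(β/2)|B|‖x - xstar‖²` when moving from the
centroid `xstar` to `x`. Strict monotonicity of the logarithm concludes.
-/

open Finset

/-- Parallel axis (Huygens–Steiner) identity: the cross terms cancel at the centroid `c`. -/
lemma sum_norm_sub_sq_eq {ι V : Type*} [NormedAddCommGroup V] [InnerProductSpace ℝ V]
    (ξ : ι → V) (B : Finset ι) (hB : B.Nonempty) (c : V)
    (hc : c = (B.card : ℝ)⁻¹ • ∑ μ ∈ B, ξ μ) (x : V) :
    ∑ μ ∈ B, ‖x - ξ μ‖ ^ 2 = B.card * ‖x - c‖ ^ 2 + ∑ μ ∈ B, ‖c - ξ μ‖ ^ 2 := by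
  have hcard : (B.card : ℝ) ≠ 0 := by exact_mod_cast hB.card_pos.ne'
  have hzero : ∑ μ ∈ B, (c - ξ μ) = 0 := by
    rw [Finset.sum_sub_distrib, Finset.sum_const, ← Nat.cast_smul_eq_nsmul ℝ, hc,
      smul_inv_smul₀ hcard, sub_self]
  have hterm : ∀ μ ∈ B, ‖x - ξ μ‖ ^ 2
      = ‖x - c‖ ^ 2 + 2 * inner ℝ (x - c) (c - ξ μ) + ‖c - ξ μ‖ ^ 2 := fun μ _ => by
    rw [← norm_add_sq_real, sub_add_sub_cancel]
  rw [Finset.sum_congr rfl hterm, Finset.sum_add_distrib, Finset.sum_add_distrib,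
    ← Finset.mul_sum, ← inner_sum, hzero, inner_zero_right, Finset.sum_const, nsmul_eq_mul]
  ring

/-- A term of the LSR sum is positive exactly on the activated indices. -/
lemma lsr_term_pos_iff {β : ℝ} (hβ : 0 < β) (t : ℝ) : 0 < 1 - β / 2 * t ↔ t < 2 / β := by
  rw [lt_div_iff₀ hβ]
  constructor <;> intro h <;> linarith

lemma sum_relu_eq_sum_activated {ι V : Type*} [Fintype ι] [NormedAddCommGroup V]
    (ξ : ι → V) {β : ℝ} (hβ : 0 < β) (B : Finset ι) (x : V)
    (hB : Finset.univ.filter (fun μ => ‖x - ξ μ‖ ^ 2 < 2 / β) = B) :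
    ∑ ν, max 0 (1 - β / 2 * ‖x - ξ ν‖ ^ 2) = ∑ ν ∈ B, (1 - β / 2 * ‖x - ξ ν‖ ^ 2) := by
  rw [← hB, Finset.sum_filter]
  refine Finset.sum_congr rfl fun ν _ => ?_
  have h := lsr_term_pos_iff hβ (‖x - ξ ν‖ ^ 2)
  split_ifs with hν
  · exact max_eq_right (h.2 hν).le
  · exact max_eq_left (not_lt.1 fun h' => hν (h.1 h'))

/-- Let `B` be a nonempty set of indices with centroid
`xstar = (1/|B|)·∑_{μ ∈ B} ξ μ`, and suppose the activated index set
`B(x) = {μ : ‖x − ξ μ‖² < 2/β}` equals `B` on the whole ball of radius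
`ρ > 0` around `xstar`.  Then `xstar` is a strict local minimum of the LSR
energy `E(x) = −(1/β)·log(ε + ∑_ν max(0, 1 − (β/2)‖x − ξ ν‖²))`:
`E(xstar) < E(x)` whenever `0 < ‖x − xstar‖ < ρ`. -/
theorem lsr_emergent_memory_strict_local_minimum
    (d M : ℕ) (ξ : Fin M → EuclideanSpace ℝ (Fin d))
    (β ε : ℝ) (hβ : 0 < β) (hε : 0 ≤ ε)
    (B : Finset (Fin M)) (hBne : B.Nonempty)
    (xstar : EuclideanSpace ℝ (Fin d))
    (hxstar : xstar = (B.card : ℝ)⁻¹ • ∑ μ ∈ B, ξ μ)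
    (ρ : ℝ) (hρ : 0 < ρ)
    (hstable : ∀ x : EuclideanSpace ℝ (Fin d), ‖x - xstar‖ < ρ →
      Finset.univ.filter (fun μ => ‖x - ξ μ‖ ^ 2 < 2 / β) = B) :
    ∀ x : EuclideanSpace ℝ (Fin d), 0 < ‖x - xstar‖ → ‖x - xstar‖ < ρ →
      -(1 / β) * Real.log (ε + ∑ ν, max 0 (1 - β / 2 * ‖xstar - ξ ν‖ ^ 2))
        < -(1 / β) * Real.log (ε + ∑ ν, max 0 (1 - β / 2 * ‖x - ξ ν‖ ^ 2)) := by
  intro x hx0 hxρ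
  have hBx := hstable x hxρ
  have hBc := hstable xstar (by simpa using hρ)
  rw [sum_relu_eq_sum_activated ξ hβ B x hBx, sum_relu_eq_sum_activated ξ hβ B xstar hBc]
  have hpos : 0 < ∑ ν ∈ B, (1 - β / 2 * ‖x - ξ ν‖ ^ 2) := by
    refine Finset.sum_pos (fun ν hν => (lsr_term_pos_iff hβ _).2 ?_) hBne
    rw [← hBx] at hν
    exact (Finset.mem_filter.1 hν).2
  have hlt : ∑ ν ∈ B, (1 - β / 2 * ‖x - ξ ν‖ ^ 2)
      < ∑ ν ∈ B, (1 - β / 2 * ‖xstar - ξ ν‖ ^ 2) := by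
    simp only [Finset.sum_sub_distrib, ← Finset.mul_sum]
    rw [sum_norm_sub_sq_eq ξ B hBne xstar hxstar x]
    have hcard : (0 : ℝ) < B.card := by exact_mod_cast hBne.card_pos
    have hgap : 0 < β / 2 * (B.card * ‖x - xstar‖ ^ 2) := by positivity
    linarith
  exact mul_lt_mul_of_neg_left (Real.log_lt_log (by linarith) (by linarith))
    (neg_lt_zero.2 (one_div_pos.2 hβ))
end
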